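/- arXiv:2107.04368 — 2 statements merged into one kernel-verified Lean document; each statement's English description precedes it below -/
import Mathlib

section
/- Every triangle-free instance (N,V) of 3D-SR-SAS-BIN contains a stable P-matching. -/
open Finset

variable {A : Type*}

/-- `M` is a matching on agent set `N`: a set of pairwise disjoint triples of agents of `N`. -/
def IsMatching [DecidableEq A] (N : Finset A) (M : Finset (Finset A)) : Prop :=
  (∀ t ∈ M, t.card = 3 ∧ t ⊆ N) ∧ ∀ t ∈ M, ∀ s ∈ M, t ≠ s → Disjoint t s

/-- The (additively separable) utility of agent `a` in matching `M` under valuations `val`: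
the sum, over the triples of `M` containing `a`, of the valuations by `a` of the other
members; this is `0` if `a` is unmatched, and for a genuine matching it is the sum of the
valuations of `a`'s two partners. -/
def utility [DecidableEq A] (val : A → A → ℤ) (M : Finset (Finset A)) (a : A) : ℤ :=
  ∑ t ∈ M.filter (fun t => a ∈ t), ∑ b ∈ t.erase a, val a b

/-- The triple consisting of the three distinct agents `x, y, z` of `N` blocks `M`. -/
def Blocks [DecidableEq A] (N : Finset A) (val : A → A → ℤ) (M : Finset (Finset A))
    (x y z : A) : Prop :=
  x ∈ N ∧ y ∈ N ∧ z ∈ N ∧ x ≠ y ∧ x ≠ z ∧ y ≠ z ∧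
  utility val M x < val x y + val x z ∧
  utility val M y < val y x + val y z ∧
  utility val M z < val z x + val z y

/-- `M` is stable: no triple of agents of `N` blocks it. -/
def IsStable [DecidableEq A] (N : Finset A) (val : A → A → ℤ) (M : Finset (Finset A)) : Prop :=
  ∀ x y z : A, ¬ Blocks N val M x y z

/-- Binary symmetric preferences on `N`. -/
def BinSym [DecidableEq A] (N : Finset A) (val : A → A → ℤ) : Prop :=
  (∀ a ∈ N, ∀ b ∈ N, a ≠ b → val a b = 0 ∨ val a b = 1) ∧
  (∀ a ∈ N, ∀ b ∈ N, val a b = val b a)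

/-- A `P`-matching: a matching in which every matched agent has strictly positive utility. -/
def IsPMatching [DecidableEq A] (N : Finset A) (val : A → A → ℤ)
    (M : Finset (Finset A)) : Prop :=
  IsMatching N M ∧ ∀ a : A, (∃ t ∈ M, a ∈ t) → 0 < utility val M a

/-- `x, y, z` form a triangle: three distinct agents of `N` whose pairwise valuations
all equal `1`. -/
def IsTriangle [DecidableEq A] (N : Finset A) (val : A → A → ℤ) (x y z : A) : Prop :=
  x ∈ N ∧ y ∈ N ∧ z ∈ N ∧ x ≠ y ∧ x ≠ z ∧ y ≠ z ∧
  val x y = 1 ∧ val y z = 1 ∧ val x z = 1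

/-- The instance contains no triangle. -/
def TriangleFree [DecidableEq A] (N : Finset A) (val : A → A → ℤ) : Prop :=
  ∀ x y z : A, ¬ IsTriangle N val x y z

/-- `c` is the center of the triple `t`: it is adjacent to both other members of `t`. -/
def IsCenter (G : SimpleGraph A) (t : Finset A) (c : A) : Prop :=
  t.card = 3 ∧ c ∈ t ∧ ∀ b ∈ t, b ≠ c → G.Adj c b

/-- `M` is a set of pairwise disjoint triples inside `S`, each of which has a center. -/
structure IsPathPacking (G : SimpleGraph A) (S : Finset A) (M : Finset (Finset A)) : Prop where
  exists_center : ∀ t ∈ M, ∃ c, IsCenter G t c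
  subset : ∀ t ∈ M, t ⊆ S
  disjoint : ∀ t ∈ M, ∀ s ∈ M, t ≠ s → Disjoint t s

/-- Every vertex of `S` that is not a center in `M` has at most one neighbour in `S` left
uncovered by `M`. -/
def IsSaturated (G : SimpleGraph A) (S : Finset A) (M : Finset (Finset A)) : Prop :=
  ∀ c ∈ S, (∀ t ∈ M, ¬ IsCenter G t c) → ∀ p ∈ S, (∀ t ∈ M, p ∉ t) →
    ∀ q ∈ S, (∀ t ∈ M, q ∉ t) → G.Adj c p → G.Adj c q → p = q

lemma IsCenter.unique {G : SimpleGraph A}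
    (hG : ∀ x y z, G.Adj x y → G.Adj y z → ¬ G.Adj x z) {t : Finset A} {b c : A}
    (hb : IsCenter G t b) (hc : IsCenter G t c) : b = c := by
  classical
  by_contra hne
  obtain ⟨e, he, heb⟩ := Finset.exists_mem_notMem_of_card_lt_card
    (s := {b, c}) (t := t) (by rw [hb.1]; exact (Finset.card_le_two).trans_lt (by norm_num))
  simp only [Finset.mem_insert, Finset.mem_singleton, not_or] at heb
  exact hG b c e (hb.2.2 c hc.2.1 (Ne.symm hne)) (hc.2.2 e he heb.2) (hb.2.2 e he heb.1)

lemma isCenter_triple [DecidableEq A] {G : SimpleGraph A} {c p q : A} (hp : G.Adj c p)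
    (hq : G.Adj c q) (hpq : p ≠ q) : IsCenter G {c, p, q} c := by
  refine ⟨Finset.card_eq_three.2 ⟨c, p, q, hp.ne, hq.ne, hpq, rfl⟩, by simp, ?_⟩
  intro b hb hbc
  simp only [Finset.mem_insert, Finset.mem_singleton] at hb
  rcases hb with rfl | rfl | rfl
  exacts [absurd rfl hbc, hp, hq]

lemma IsCenter.exists_eq_triple [DecidableEq A] {G : SimpleGraph A} {t : Finset A} {b c : A}
    (h : IsCenter G t b) (hc : c ∈ t) (hcb : c ≠ b) :
    ∃ d, t = {b, c, d} ∧ d ≠ b ∧ d ≠ c ∧ G.Adj b c ∧ G.Adj b d := by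
  have hcard : ((t.erase b).erase c).card = 1 := by
    rw [Finset.card_erase_of_mem (by simp [hc, hcb]), Finset.card_erase_of_mem h.2.1, h.1]
  obtain ⟨d, hd⟩ := Finset.card_eq_one.1 hcard
  have hdt : d ≠ c ∧ d ≠ b ∧ d ∈ t := by
    have : d ∈ (t.erase b).erase c := by simp [hd]
    simpa only [Finset.mem_erase] using this
  refine ⟨d, ?_, hdt.2.1, hdt.1, h.2.2 c hc hcb, h.2.2 d hdt.2.2 hdt.2.1⟩
  rw [← hd, Finset.insert_erase (by simp [hc, hcb]), Finset.insert_erase h.2.1]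

namespace IsPathPacking

variable {G : SimpleGraph A} {S T : Finset A} {M : Finset (Finset A)}

lemma mono (h : IsPathPacking G S M) (hST : S ⊆ T) : IsPathPacking G T M :=
  ⟨h.exists_center, fun t ht => (h.subset t ht).trans hST, h.disjoint⟩

lemma erase [DecidableEq A] (h : IsPathPacking G S M) {t : Finset A} (ht : t ∈ M)
    (hT : S \ t ⊆ T) : IsPathPacking G T (M.erase t) := by
  refine ⟨fun s hs => h.exists_center s (Finset.mem_of_mem_erase hs), fun s hs => ?_,
    fun s hs r hr => h.disjoint s (Finset.mem_of_mem_erase hs) r (Finset.mem_of_mem_erase hr)⟩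
  obtain ⟨hst, hs⟩ := Finset.mem_erase.1 hs
  exact fun a ha => hT (Finset.mem_sdiff.2
    ⟨h.subset s hs ha, Finset.disjoint_left.1 (h.disjoint s hs t ht hst) ha⟩)

lemma insert_triple [DecidableEq A] (h : IsPathPacking G S M) {c p q : A}
    (hp : G.Adj c p) (hq : G.Adj c q) (hpq : p ≠ q)
    (hcS : c ∈ S) (hpS : p ∈ S) (hqS : q ∈ S)
    (hcM : ∀ s ∈ M, c ∉ s) (hpM : ∀ s ∈ M, p ∉ s) (hqM : ∀ s ∈ M, q ∉ s) :
    IsPathPacking G S (insert {c, p, q} M) := by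
  have hdisj : ∀ s ∈ M, Disjoint ({c, p, q} : Finset A) s := fun s hs => by
    simp [Finset.disjoint_insert_left, hcM s hs, hpM s hs, hqM s hs]
  refine ⟨?_, ?_, ?_⟩
  · intro t ht
    rcases Finset.mem_insert.1 ht with rfl | ht
    exacts [⟨c, isCenter_triple hp hq hpq⟩, h.exists_center t ht]
  · intro t ht
    rcases Finset.mem_insert.1 ht with rfl | ht
    · simp [Finset.insert_subset_iff, hcS, hpS, hqS]
    · exact h.subset t ht
  · intro t ht s hs hts
    rcases Finset.mem_insert.1 ht with rfl | ht <;> rcases Finset.mem_insert.1 hs with rfl | hs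
    exacts [absurd rfl hts, hdisj s hs, (hdisj t ht).symm, h.disjoint t ht s hs hts]

end IsPathPacking

open Classical in
/-- The triples of `M` whose center has no neighbour in `S` left uncovered by `M`. -/
noncomputable def idleTriples (G : SimpleGraph A) (S : Finset A) (M : Finset (Finset A)) :
    Finset (Finset A) :=
  M.filter fun t => ∃ c, IsCenter G t c ∧ ∀ p ∈ S, (∀ s ∈ M, p ∉ s) → ¬ G.Adj c p

lemma mem_idleTriples {G : SimpleGraph A} {S : Finset A} {M : Finset (Finset A)} {t : Finset A} :
    t ∈ idleTriples G S M ↔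
      t ∈ M ∧ ∃ c, IsCenter G t c ∧ ∀ p ∈ S, (∀ s ∈ M, p ∉ s) → ¬ G.Adj c p := by
  simp [idleTriples]

/-- A saturated path packing of a triangle-free graph can be repaired after a vertex is added. -/
lemma exists_saturated_of_erase [DecidableEq A] {G : SimpleGraph A}
    (hG : ∀ x y z, G.Adj x y → G.Adj y z → ¬ G.Adj x z) (R : Finset A) {x : A} (hx : x ∈ R)
    {M : Finset (Finset A)} (hM : IsPathPacking G (R.erase x) M)
    (hsat : IsSaturated G (R.erase x) M) :
    ∃ M', IsPathPacking G R M' ∧ IsSaturated G R M' := by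
  induction hn : (idleTriples G (R.erase x) M).card using Nat.strong_induction_on
    generalizing x M with
  | _ n ih =>
  have hMR := hM.mono (Finset.erase_subset x R)
  have hxM : ∀ t ∈ M, x ∉ t := fun t ht hxt => by simpa using hM.subset t ht hxt
  by_cases hx2 : ∃ p ∈ R.erase x, (∀ t ∈ M, p ∉ t) ∧ ∃ q ∈ R.erase x, (∀ t ∈ M, q ∉ t) ∧
      G.Adj x p ∧ G.Adj x q ∧ p ≠ q
  · obtain ⟨p, hp, hpM, q, hq, hqM, hxp, hxq, hpq⟩ := hx2
    refine ⟨_, hMR.insert_triple hxp hxq hpq hx (Finset.mem_of_mem_erase hp)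
      (Finset.mem_of_mem_erase hq) hxM hpM hqM, ?_⟩
    have hcen := isCenter_triple hxp hxq hpq
    intro c hc hcM r hr hrM s hs hsM
    simp only [Finset.forall_mem_insert] at hcM hrM hsM
    have h1 : c ≠ x := by rintro rfl; exact hcM.1 hcen
    have h2 : r ≠ x := by rintro rfl; simp at hrM
    have h3 : s ≠ x := by rintro rfl; simp at hsM
    exact hsat c (by simp [*]) hcM.2 r (by simp [*]) hrM.2 s (by simp [*]) hsM.2
  have hx1 : ∀ p ∈ R, p ≠ x → (∀ t ∈ M, p ∉ t) → ∀ q ∈ R, q ≠ x → (∀ t ∈ M, q ∉ t) →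
      G.Adj x p → G.Adj x q → p = q := by
    intro p hp hpx hpM q hq hqx hqM hxp hxq
    by_contra hpq
    exact hx2 ⟨p, by simp [*], hpM, q, by simp [*], hqM, hxp, hxq, hpq⟩
  by_cases hsatR : IsSaturated G R M
  · exact ⟨M, hMR, hsatR⟩
  obtain ⟨c, hcR, hcM, q, hqR, hqM, hqx, hcx, hcq⟩ : ∃ c ∈ R, (∀ t ∈ M, ¬ IsCenter G t c) ∧
      ∃ q ∈ R, (∀ t ∈ M, q ∉ t) ∧ q ≠ x ∧ G.Adj c x ∧ G.Adj c q := by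
    by_contra hno
    refine hsatR fun c hc hcM p hp hpM q hq hqM hcp hcq => ?_
    by_cases hpx : p = x
    · subst hpx
      by_contra hpq
      exact hno ⟨c, hc, hcM, q, hq, hqM, Ne.symm hpq, hcp, hcq⟩
    by_cases hqx : q = x
    · subst hqx
      exact absurd ⟨c, hc, hcM, p, hp, hpM, hpx, hcq, hcp⟩ hno
    by_cases hcx : c = x
    · subst hcx
      exact hx1 p hp hpx hpM q hq hqx hqM hcp hcq
    exact hsat c (by simp [*]) hcM p (by simp [*]) hpM q (by simp [*]) hqM hcp hcq
  have hcx' : c ≠ x := hcx.ne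
  by_cases hc : ∀ t ∈ M, c ∉ t
  · refine ⟨_, hMR.insert_triple hcx hcq hqx.symm hcR hx hqR hc hxM hqM, ?_⟩
    intro e he heM r hr hrM s hs hsM
    simp only [Finset.forall_mem_insert] at heM hrM hsM
    have h2 : r ≠ x := by rintro rfl; simp at hrM
    have h3 : s ≠ x := by rintro rfl; simp at hsM
    by_cases h1 : e = x
    · subst h1
      exact hx1 r hr h2 hrM.2 s hs h3 hsM.2
    exact hsat e (by simp [*]) heM.2 r (by simp [*]) hrM.2 s (by simp [*]) hsM.2
  push Not at hc
  obtain ⟨t, ht, hct⟩ := hc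
  obtain ⟨b, hbt⟩ := hM.exists_center t ht
  have hcb : c ≠ b := by rintro rfl; exact hcM t ht hbt
  obtain ⟨d, htd, hdb, hdc, hbc, hbd⟩ := hbt.exists_eq_triple hct hcb
  have hbmem : b ∈ t := by simp [htd]
  have hdmem : d ∈ t := by simp [htd]
  have hbR := hMR.subset t ht hbmem
  have hdR := hMR.subset t ht hdmem
  have hbx : b ≠ x := by rintro rfl; exact hxM t ht hbmem
  have hdx : d ≠ x := by rintro rfl; exact hxM t ht hdmem
  have herase : ∀ a ∈ t, ∀ s ∈ M.erase t, a ∉ s := fun a ha s hs has =>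
    Finset.disjoint_left.1 (hM.disjoint s (Finset.mem_of_mem_erase hs) t ht
      (Finset.ne_of_mem_erase hs)) has ha
  have hcover : ∀ r, (r ≠ b ∧ r ≠ c ∧ r ≠ d) → (∀ s ∈ M.erase t, r ∉ s) → ∀ s ∈ M, r ∉ s := by
    intro r hr hrM s hs
    by_cases hst : s = t
    · simp [hst, htd, hr]
    · exact hrM s (Finset.mem_erase.2 ⟨hst, hs⟩)
  have hcenter : ∀ e, e ≠ b → (∀ s ∈ M.erase t, ¬ IsCenter G s e) →
      ∀ s ∈ M, ¬ IsCenter G s e := by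
    intro e heb heM s hs hse
    by_cases hst : s = t
    · exact heb (IsCenter.unique hG hse (hst ▸ hbt))
    · exact heM s (Finset.mem_erase.2 ⟨hst, hs⟩) hse
  have hxM' : ∀ s ∈ M.erase t, x ∉ s := fun s hs => hxM s (Finset.mem_of_mem_erase hs)
  have hqM' : ∀ s ∈ M.erase t, q ∉ s := fun s hs => hqM s (Finset.mem_of_mem_erase hs)
  have hqt : q ∉ t := hqM t ht
  have hqb : q ≠ b := by rintro rfl; exact hqt hbmem
  have hqd : q ≠ d := by rintro rfl; exact hqt hdmem
  by_cases hb : ∃ r ∈ R, r ≠ x ∧ (∀ s ∈ M, r ∉ s) ∧ G.Adj b r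
  · obtain ⟨r, hrR, hrx, hrM, hbr⟩ := hb
    have hrt : r ∉ t := hrM t ht
    have hrd : d ≠ r := by rintro rfl; exact hrt hdmem
    have hrc : c ≠ r := by rintro rfl; exact hrt hct
    have hrq : q ≠ r := by rintro rfl; exact hG b c q hbc hcq hbr
    have h₁ := (hMR.erase ht Finset.sdiff_subset).insert_triple hbd hbr hrd hbR hdR hrR
      (herase b hbmem) (herase d hdmem) fun s hs => hrM s (Finset.mem_of_mem_erase hs)
    have h₂ := h₁.insert_triple hcx hcq hqx.symm hcR hx hqR
      (by simpa [Finset.forall_mem_insert, hcb, hdc.symm, hrc] using herase c hct)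
      (by simpa [Finset.forall_mem_insert, hbx.symm, hdx.symm, hrx.symm] using hxM')
      (by simpa [Finset.forall_mem_insert, hqb, hqd, hrq] using hqM')
    refine ⟨_, h₂, ?_⟩
    have hcen := isCenter_triple hbd hbr hrd
    intro e he heM u hu huM v hv hvM
    simp only [Finset.forall_mem_insert] at heM huM hvM
    simp only [Finset.mem_insert, Finset.mem_singleton, not_or] at huM hvM
    have huM' := hcover u ⟨huM.2.1.1, huM.1.1, huM.2.1.2.1⟩ huM.2.2
    have hvM' := hcover v ⟨hvM.2.1.1, hvM.1.1, hvM.2.1.2.1⟩ hvM.2.2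
    have heb : e ≠ b := by rintro rfl; exact heM.2.1 hcen
    by_cases hex : e = x
    · subst hex
      exact hx1 u hu huM.1.2.1 huM' v hv hvM.1.2.1 hvM'
    exact hsat e (by simp [*]) (hcenter e heb heM.2.2) u (by simp [*]) huM' v (by simp [*]) hvM'
  have hb0 : ∀ r ∈ R, r ≠ x → (∀ s ∈ M, r ∉ s) → ¬ G.Adj b r :=
    fun r hr hrx hrM hbr => hb ⟨r, hr, hrx, hrM, hbr⟩
  have hcen := isCenter_triple hcx hbc.symm hbx.symm
  have hpack : IsPathPacking G (R.erase d) (insert {c, x, b} (M.erase t)) :=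
    (hM.erase ht fun a ha => by
      simp only [Finset.mem_sdiff, Finset.mem_erase] at ha ⊢
      exact ⟨by rintro rfl; exact ha.2 hdmem, ha.1.2⟩).insert_triple hcx hbc.symm hbx.symm
      (by simp [hcR, hdc.symm]) (by simp [hx, hdx.symm]) (by simp [hbR, hdb.symm])
      (herase c hct) hxM' (herase b hbmem)
  have huncov : ∀ r ∈ R.erase d, (∀ s ∈ insert {c, x, b} (M.erase t), r ∉ s) →
      r ≠ x ∧ ∀ s ∈ M, r ∉ s := by
    intro r hr hrM
    simp only [Finset.forall_mem_insert] at hrM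
    simp only [Finset.mem_insert, Finset.mem_singleton, not_or] at hrM
    exact ⟨hrM.1.2.1, hcover r ⟨hrM.1.2.2, hrM.1.1, Finset.ne_of_mem_erase hr⟩ hrM.2⟩
  have huncov' : ∀ r ∈ R.erase x, (∀ s ∈ M, r ∉ s) →
      r ∈ R.erase d ∧ ∀ s ∈ insert {c, x, b} (M.erase t), r ∉ s := by
    intro r hr hrM
    have hrt := hrM t ht
    simp only [htd, Finset.mem_insert, Finset.mem_singleton, not_or] at hrt
    obtain ⟨hrx, hrR⟩ := Finset.mem_erase.1 hr
    refine ⟨Finset.mem_erase.2 ⟨hrt.2.2, hrR⟩, ?_⟩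
    simp only [Finset.forall_mem_insert]
    simp only [Finset.mem_insert, Finset.mem_singleton, not_or]
    exact ⟨⟨hrt.2.1, hrx, hrt.1⟩, fun s hs => hrM s (Finset.mem_of_mem_erase hs)⟩
  refine ih _ ?_ hdR hpack ?_ rfl
  · rw [← hn]
    refine Finset.card_lt_card (Finset.ssubset_iff_of_subset ?_ |>.2 ⟨t, ?_, ?_⟩)
    · intro s hs
      rw [mem_idleTriples] at hs ⊢
      obtain ⟨hsM, e, hse, he⟩ := hs
      rcases Finset.mem_insert.1 hsM with rfl | hsM
      · obtain ⟨h1, h2⟩ := huncov' q (by simp [*]) hqM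
        exact absurd (IsCenter.unique hG hse hcen ▸ hcq) (he q h1 h2)
      · refine ⟨Finset.mem_of_mem_erase hsM, e, hse, fun p hp hpM => ?_⟩
        obtain ⟨h1, h2⟩ := huncov' p hp hpM
        exact he p h1 h2
    · rw [mem_idleTriples]
      exact ⟨ht, b, hbt, fun p hp => hb0 p (Finset.mem_of_mem_erase hp)
        (Finset.ne_of_mem_erase hp)⟩
    · intro htm
      rcases Finset.mem_insert.1 (mem_idleTriples.1 htm).1 with h | h
      · exact hxM t ht (by simp [h])
      · simp at h
  · intro e he heM u hu huM v hv hvM heu hev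
    obtain ⟨hux, huM'⟩ := huncov u hu huM
    obtain ⟨hvx, hvM'⟩ := huncov v hv hvM
    have huR := Finset.mem_of_mem_erase hu
    have hvR := Finset.mem_of_mem_erase hv
    simp only [Finset.forall_mem_insert] at heM
    by_cases hex : e = x
    · subst hex
      exact hx1 u huR hux huM' v hvR hvx hvM' heu hev
    by_cases heb : e = b
    · subst heb
      exact absurd heu (hb0 u huR hux huM')
    exact hsat e (Finset.mem_erase.2 ⟨hex, Finset.mem_of_mem_erase he⟩) (hcenter e heb heM.2)
      u (Finset.mem_erase.2 ⟨hux, huR⟩) huM' v (Finset.mem_erase.2 ⟨hvx, hvR⟩) hvM' heu hev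

lemma exists_saturated_pathPacking [DecidableEq A] {G : SimpleGraph A}
    (hG : ∀ x y z, G.Adj x y → G.Adj y z → ¬ G.Adj x z) (S : Finset A) :
    ∃ M, IsPathPacking G S M ∧ IsSaturated G S M := by
  induction S using Finset.induction_on with
  | empty => exact ⟨∅, ⟨by simp, by simp, by simp⟩, by simp [IsSaturated]⟩
  | insert x S hx ih =>
    obtain ⟨M, hM, hsat⟩ := ih
    rw [← Finset.erase_insert hx] at hM hsat
    exact exists_saturated_of_erase hG _ (Finset.mem_insert_self x S) hM hsat

/-- The graph on `N` whose edges are the pairs of distinct agents with valuation `1`. -/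
def valuationGraph [DecidableEq A] {N : Finset A} {val : A → A → ℤ} (hbs : BinSym N val) :
    SimpleGraph A where
  Adj x y := x ∈ N ∧ y ∈ N ∧ x ≠ y ∧ val x y = 1
  symm := ⟨fun x y h => ⟨h.2.1, h.1, h.2.2.1.symm, (hbs.2 y h.2.1 x h.1).trans h.2.2.2⟩⟩
  loopless := ⟨fun _ h => h.2.2.1 rfl⟩

lemma utility_of_mem [DecidableEq A] {N : Finset A} {val : A → A → ℤ} {M : Finset (Finset A)}
    (hM : IsMatching N M) {t : Finset A} (ht : t ∈ M) {a : A} (ha : a ∈ t) :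
    utility val M a = ∑ b ∈ t.erase a, val a b := by
  have : M.filter (fun s => a ∈ s) = {t} := by
    ext s
    simp only [Finset.mem_filter, Finset.mem_singleton]
    refine ⟨fun h => ?_, by rintro rfl; exact ⟨ht, ha⟩⟩
    by_contra hne
    exact Finset.disjoint_left.1 (hM.2 s h.1 t ht hne) h.2 ha
  rw [utility, this, Finset.sum_singleton]

lemma utility_of_forall_notMem [DecidableEq A] {val : A → A → ℤ} {M : Finset (Finset A)} {a : A}
    (ha : ∀ t ∈ M, a ∉ t) : utility val M a = 0 := by
  rw [utility, Finset.filter_false_of_mem ha, Finset.sum_empty]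

/-- Every triangle-free binary symmetric instance contains a stable `P`-matching. -/
theorem triangleFree_exists_stable_pmatching [DecidableEq A]
    (N : Finset A) (val : A → A → ℤ)
    (hbs : BinSym N val) (htf : TriangleFree N val) :
    ∃ M, IsPMatching N val M ∧ IsStable N val M := by
  have hG : ∀ x y z, (valuationGraph hbs).Adj x y → (valuationGraph hbs).Adj y z →
      ¬ (valuationGraph hbs).Adj x z := fun x y z hxy hyz hxz =>
    htf x y z ⟨hxy.1, hxy.2.1, hyz.2.1, hxy.2.2.1, hxz.2.2.1, hyz.2.2.1, hxy.2.2.2, hyz.2.2.2,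
      hxz.2.2.2⟩
  obtain ⟨M, hM, hsat⟩ := exists_saturated_pathPacking hG N
  have hmatch : IsMatching N M := by
    refine ⟨fun t ht => ⟨?_, hM.subset t ht⟩, hM.disjoint⟩
    obtain ⟨c, hc⟩ := hM.exists_center t ht
    exact hc.1
  have hnonneg : ∀ t ∈ M, ∀ a ∈ t, ∀ b ∈ t.erase a, 0 ≤ val a b := by
    intro t ht a ha b hb
    obtain ⟨hba, hb⟩ := Finset.mem_erase.1 hb
    rcases hbs.1 a (hM.subset t ht ha) b (hM.subset t ht hb) hba.symm with h | h <;> simp [h]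
  have hcenter : ∀ t ∈ M, ∀ c, IsCenter (valuationGraph hbs) t c → utility val M c = 2 := by
    intro t ht c hc
    rw [utility_of_mem hmatch ht hc.2.1, Finset.sum_congr rfl (g := fun _ => (1 : ℤ))
      fun b hb => (hc.2.2 b (Finset.mem_of_mem_erase hb) (Finset.ne_of_mem_erase hb)).2.2.2]
    simp [Finset.card_erase_of_mem hc.2.1, hc.1]
  have hpos : ∀ a, (∃ t ∈ M, a ∈ t) → 0 < utility val M a := by
    rintro a ⟨t, ht, ha⟩
    obtain ⟨c, hc⟩ := hM.exists_center t ht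
    by_cases hac : a = c
    · rw [hac, hcenter t ht c hc]; norm_num
    · rw [utility_of_mem hmatch ht ha]
      refine Finset.sum_pos' (hnonneg t ht a ha)
        ⟨c, Finset.mem_erase.2 ⟨Ne.symm hac, hc.2.1⟩, ?_⟩
      rw [(hc.2.2 a ha hac).symm.2.2.2]
      norm_num
  have hutil : ∀ a, 0 ≤ utility val M a := by
    intro a
    by_cases ha : ∃ t ∈ M, a ∈ t
    · exact (hpos a ha).le
    · push Not at ha
      exact (utility_of_forall_notMem ha).ge
  have hpath : ∀ c ∈ N, ∀ p ∈ N, ∀ q ∈ N, c ≠ p → c ≠ q → p ≠ q → val c p = 1 → val c q = 1 →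
      utility val M c < 2 → utility val M p < 1 → utility val M q < 1 → False := by
    intro c hc p hp q hq hcp hcq hpq hvp hvq huc hup huq
    refine hpq (hsat c hc (fun t ht h => ?_) p hp (fun t ht h => ?_) q hq (fun t ht h => ?_)
      ⟨hc, hp, hcp, hvp⟩ ⟨hc, hq, hcq, hvq⟩)
    · have := hcenter t ht c h
      omega
    · have := hpos p ⟨t, ht, h⟩
      omega
    · have := hpos q ⟨t, ht, h⟩
      omega
  refine ⟨M, ⟨hmatch, hpos⟩, ?_⟩
  rintro x y z ⟨hx, hy, hz, hxy, hxz, hyz, hux, huy, huz⟩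
  have h0x := hutil x
  have h0y := hutil y
  have h0z := hutil z
  rw [hbs.2 y hy x hx] at huy
  rw [hbs.2 z hz x hx, hbs.2 z hz y hy] at huz
  have hyx' := hbs.2 y hy x hx
  have hzx' := hbs.2 z hz x hx
  have hzy' := hbs.2 z hz y hy
  have htri : ¬ (val x y = 1 ∧ val y z = 1 ∧ val x z = 1) := fun h =>
    htf x y z ⟨hx, hy, hz, hxy, hxz, hyz, h⟩
  rcases hbs.1 x hx y hy hxy with h1 | h1 <;> rcases hbs.1 x hx z hz hxz with h2 | h2 <;>
    rcases hbs.1 y hy z hz hyz with h3 | h3 <;> try omega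
  · exact hpath z hz x hx y hy hxz.symm hyz.symm hxy (by omega) (by omega) (by omega) (by omega)
      (by omega)
  · exact hpath y hy x hx z hz hxy.symm hyz hxz (by omega) (by omega) (by omega) (by omega)
      (by omega)
  · exact hpath x hx y hy z hz hxy hxz hyz (by omega) (by omega) (by omega) (by omega)
      (by omega)
end

section
/- Every instance (N,V) of 3D-SR-SAS-BIN contains a stable P-matching, and hence a stable matching. Moreover, if |N| is a multiple of three, then (N,V) contains a stable matching in which every agent is matched. -/
open Finset

variable {A : Type*}

section Utility

variable [DecidableEq A] {N : Finset A} {val : A → A → ℤ} {M : Finset (Finset A)}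

lemma BinSym.mono {N' : Finset A} (h : BinSym N val) (hN : N' ⊆ N) : BinSym N' val :=
  ⟨fun a ha b hb => h.1 a (hN ha) b (hN hb), fun a ha b hb => h.2 a (hN ha) b (hN hb)⟩

lemma IsPMatching.mono {N' : Finset A} (h : IsPMatching N val M) (hN : N ⊆ N') :
    IsPMatching N' val M :=
  ⟨⟨fun t ht => ⟨(h.1.1 t ht).1, (h.1.1 t ht).2.trans hN⟩, h.1.2⟩, h.2⟩

lemma utility_eq_zero_of_unmatched {a : A} (h : ∀ t ∈ M, a ∉ t) : utility val M a = 0 := by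
  unfold utility
  rw [Finset.filter_eq_empty_iff.2 fun t ht => h t ht, Finset.sum_empty]

lemma IsMatching.utility_eq (hM : IsMatching N M) {t : Finset A} (ht : t ∈ M) {a : A}
    (ha : a ∈ t) : utility val M a = ∑ b ∈ t.erase a, val a b := by
  unfold utility
  have : M.filter (fun s => a ∈ s) = {t} := by
    ext s
    simp only [Finset.mem_filter, Finset.mem_singleton]
    constructor
    · rintro ⟨hs, has⟩
      by_contra hne
      exact Finset.disjoint_left.1 (hM.2 s hs t ht hne) has ha
    · rintro rfl
      exact ⟨ht, ha⟩
  rw [this, Finset.sum_singleton]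

lemma IsMatching.utility_eq_add (hM : IsMatching N M) {x y z : A} (hxy : x ≠ y) (hxz : x ≠ z)
    (hyz : y ≠ z) (ht : {x, y, z} ∈ M) : utility val M x = val x y + val x z := by
  rw [hM.utility_eq ht (by simp), Finset.erase_insert (by simp [hxy, hxz]),
    Finset.sum_pair hyz]

lemma IsPMatching.utility_nonneg (hM : IsPMatching N val M) (a : A) : 0 ≤ utility val M a := by
  by_cases h : ∃ t ∈ M, a ∈ t
  · exact (hM.2 a h).le
  · push Not at h
    rw [utility_eq_zero_of_unmatched h]

lemma IsPMatching.unmatched (hM : IsPMatching N val M) {a : A} (ha : utility val M a = 0) :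
    ∀ t ∈ M, a ∉ t := fun t ht hat => (hM.2 a ⟨t, ht, hat⟩).ne' ha

/-- Raising utilities cannot create blocking triples. -/
lemma IsStable.of_utility_le {M' : Finset (Finset A)} (h : IsStable N val M)
    (hle : ∀ a ∈ N, utility val M a ≤ utility val M' a) : IsStable N val M' := by
  rintro x y z ⟨hx, hy, hz, hxy, hxz, hyz, h1, h2, h3⟩
  exact h x y z ⟨hx, hy, hz, hxy, hxz, hyz, (hle x hx).trans_lt h1, (hle y hy).trans_lt h2,
    (hle z hz).trans_lt h3⟩

lemma IsMatching.insert {x y z : A} (hM : IsMatching N M) (hx : x ∈ N) (hy : y ∈ N) (hz : z ∈ N)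
    (hxy : x ≠ y) (hxz : x ≠ z) (hyz : y ≠ z) (ux : ∀ t ∈ M, x ∉ t) (uy : ∀ t ∈ M, y ∉ t)
    (uz : ∀ t ∈ M, z ∉ t) : IsMatching N (insert {x, y, z} M) := by
  have hd : ∀ s ∈ M, Disjoint ({x, y, z} : Finset A) s := by
    intro s hs
    simp [ux s hs, uy s hs, uz s hs]
  refine ⟨?_, ?_⟩
  · intro t ht
    rcases Finset.mem_insert.1 ht with rfl | ht
    · refine ⟨Finset.card_eq_three.2 ⟨x, y, z, hxy, hxz, hyz, rfl⟩, ?_⟩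
      simp [Finset.insert_subset_iff, hx, hy, hz]
    · exact hM.1 t ht
  · intro t ht s hs hne
    rcases Finset.mem_insert.1 ht with rfl | ht <;> rcases Finset.mem_insert.1 hs with rfl | hs
    · exact absurd rfl hne
    · exact hd s hs
    · exact (hd t ht).symm
    · exact hM.2 t ht s hs hne

lemma utility_insert_of_notMem {t : Finset A} {a : A} (ha : a ∉ t) :
    utility val (insert t M) a = utility val M a := by
  unfold utility
  rw [Finset.filter_insert, if_neg ha]

lemma utility_erase_of_notMem {t : Finset A} {a : A} (ha : a ∉ t) :
    utility val (M.erase t) a = utility val M a := by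
  unfold utility
  congr 1
  ext s
  simp only [Finset.mem_filter, Finset.mem_erase]
  grind

/-- Three unmatched agents forming a path with centre `c` can be added to a `P`-matching. -/
lemma IsPMatching.insert_path {a c b : A} (hbs : BinSym N val) (hM : IsPMatching N val M)
    (ha : a ∈ N) (hc : c ∈ N) (hb : b ∈ N) (hac : a ≠ c) (hab : a ≠ b) (hcb : c ≠ b)
    (ua : utility val M a = 0) (uc : utility val M c = 0) (ub : utility val M b = 0)
    (vca : val c a = 1) (vcb : val c b = 1) :
    IsPMatching N val (insert {a, c, b} M) ∧
      utility val (insert {a, c, b} M) c = 2 ∧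
      0 < utility val (insert {a, c, b} M) a ∧
      0 < utility val (insert {a, c, b} M) b ∧
      ∀ v, v ≠ a → v ≠ c → v ≠ b →
        utility val (insert {a, c, b} M) v = utility val M v := by
  have hM' := hM.1.insert ha hc hb hac hab hcb (hM.unmatched ua) (hM.unmatched uc)
    (hM.unmatched ub)
  have ht : {a, c, b} ∈ insert {a, c, b} M := Finset.mem_insert_self _ _
  have e1 := hM'.utility_eq_add (val := val) hac hab hcb ht
  have e2 := hM'.utility_eq_add (val := val) (x := c) (y := a) (z := b) hac.symm hcb hab
    (by rw [Finset.insert_comm c a]; exact ht)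
  have e3 := hM'.utility_eq_add (val := val) (x := b) (y := a) (z := c) hab.symm hcb.symm hac
    (by
      have : ({b, a, c} : Finset A) = {a, c, b} := by ext; simp; tauto
      rw [this]; exact ht)
  have s1 := hbs.2 a ha c hc
  have s2 := hbs.2 b hb c hc
  have p1 := hbs.1 a ha b hb hab
  have p2 := hbs.1 b hb a ha hab.symm
  have e4 : ∀ v, v ≠ a → v ≠ c → v ≠ b →
      utility val (insert {a, c, b} M) v = utility val M v := fun v h1 h2 h3 =>
    utility_insert_of_notMem (by simp [h1, h2, h3])
  refine ⟨⟨hM', ?_⟩, by omega, by omega, by omega, e4⟩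
  rintro v ⟨t, ht', hvt⟩
  by_cases h1 : v = a
  · subst h1; omega
  by_cases h2 : v = c
  · subst h2; omega
  by_cases h3 : v = b
  · subst h3; omega
  rw [e4 v h1 h2 h3]
  rcases Finset.mem_insert.1 ht' with rfl | ht'
  · simp [h1, h2, h3] at hvt
  · exact hM.2 v ⟨t, ht', hvt⟩

lemma IsPMatching.erase (hM : IsPMatching N val M) {t : Finset A} (ht : t ∈ M) :
    IsPMatching N val (M.erase t) ∧ (∀ a ∈ t, utility val (M.erase t) a = 0) ∧
      ∀ a ∉ t, utility val (M.erase t) a = utility val M a := by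
  have hz : ∀ a ∈ t, ∀ s ∈ M.erase t, a ∉ s := by
    intro a ha s hs has
    exact Finset.disjoint_left.1
      (hM.1.2 s (Finset.mem_of_mem_erase hs) t ht (Finset.ne_of_mem_erase hs)) has ha
  refine ⟨⟨⟨fun s hs => hM.1.1 s (Finset.mem_of_mem_erase hs), fun s hs r hr =>
    hM.1.2 s (Finset.mem_of_mem_erase hs) r (Finset.mem_of_mem_erase hr)⟩, ?_⟩,
    fun a ha => utility_eq_zero_of_unmatched (hz a ha), fun a ha => utility_erase_of_notMem ha⟩
  rintro v ⟨s, hs, hvs⟩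
  by_cases hv : v ∈ t
  · exact absurd hvs (hz v hv s hs)
  · rw [utility_erase_of_notMem hv]
    exact hM.2 v ⟨s, Finset.mem_of_mem_erase hs, hvs⟩

end Utility

section TriangleFree

variable [DecidableEq A] {N : Finset A} {val : A → A → ℤ} {M : Finset (Finset A)}

/-- Every agent of `N` with two neighbours in the set `R` of agents has utility at least `2`. -/
def Saturates (N : Finset A) (val : A → A → ℤ) (M : Finset (Finset A)) (R : A → Prop) : Prop :=
  ∀ y ∈ N, ∀ x ∈ N, ∀ z ∈ N, y ≠ x → y ≠ z → x ≠ z → val y x = 1 → val y z = 1 →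
    R x → R z → 2 ≤ utility val M y

/-- In a triangle-free instance a `P`-matching is stable as soon as every agent with two
unmatched neighbours has utility at least `2`. -/
lemma IsPMatching.isStable (hbs : BinSym N val) (htf : TriangleFree N val)
    (hM : IsPMatching N val M) (hS : Saturates N val M fun a => utility val M a = 0) :
    IsStable N val M := by
  rintro x y z ⟨hx, hy, hz, hxy, hxz, hyz, h1, h2, h3⟩
  have nx := hM.utility_nonneg x
  have ny := hM.utility_nonneg y
  have nz := hM.utility_nonneg z
  have sxy := hbs.2 y hy x hx
  have sxz := hbs.2 z hz x hx
  have syz := hbs.2 z hz y hy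
  have bxy := hbs.1 x hx y hy hxy
  have bxz := hbs.1 x hx z hz hxz
  have byz := hbs.1 y hy z hz hyz
  have tri : ¬ (val x y = 1 ∧ val y z = 1 ∧ val x z = 1) := fun ⟨a, b, c⟩ =>
    htf x y z ⟨hx, hy, hz, hxy, hxz, hyz, a, b, c⟩
  rcases bxy with e1 | e1 <;> rcases bxz with e2 | e2 <;> rcases byz with e3 | e3 <;>
    try omega
  · have := hS z hz x hx y hy hxz.symm hyz.symm hxy (by omega) (by omega) (by omega) (by omega)
    omega
  · have := hS y hy x hx z hz hxy.symm hyz hxz (by omega) (by omega) (by omega) (by omega)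
    omega
  · have := hS x hx y hy z hz hxy hxz hyz (by omega) (by omega) (by omega) (by omega)
    omega

/-- An agent of positive utility less than `2` in a `P`-matching is an end of a path
`y - c - w` forming a triple of the matching. -/
lemma IsPMatching.exists_path (hbs : BinSym N val) (hM : IsPMatching N val M) {y : A}
    (h0 : utility val M y ≠ 0) (h2 : utility val M y < 2) :
    ∃ c w, c ∈ N ∧ w ∈ N ∧ y ≠ c ∧ y ≠ w ∧ c ≠ w ∧ {y, c, w} ∈ M ∧ val c y = 1 ∧ val c w = 1 ∧
      utility val M y = 1 ∧ utility val M c = 2 ∧ utility val M w = 1 := by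
  have key : ∃ t ∈ M, y ∈ t := by
    by_contra h
    push Not at h
    exact h0 (utility_eq_zero_of_unmatched h)
  obtain ⟨t, ht, hyt⟩ := key
  have hyN := (hM.1.1 t ht).2 hyt
  have hcard : (t.erase y).card = 2 := by
    rw [Finset.card_erase_of_mem hyt, (hM.1.1 t ht).1]
  obtain ⟨p, q, hpq, hte⟩ := Finset.card_eq_two.1 hcard
  have hteq : t = {y, p, q} := by rw [← hte, Finset.insert_erase hyt]
  have hyp : y ≠ p := by
    have : p ∈ t.erase y := by simp [hte]
    exact (Finset.ne_of_mem_erase this).symm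
  have hyq : y ≠ q := by
    have : q ∈ t.erase y := by simp [hte]
    exact (Finset.ne_of_mem_erase this).symm
  have main : ∀ c w, y ≠ c → y ≠ w → c ≠ w → {y, c, w} = t → val y c = 1 →
      ∃ c w, c ∈ N ∧ w ∈ N ∧ y ≠ c ∧ y ≠ w ∧ c ≠ w ∧ {y, c, w} ∈ M ∧ val c y = 1 ∧
        val c w = 1 ∧ utility val M y = 1 ∧ utility val M c = 2 ∧ utility val M w = 1 := by
    intro c w hyc hyw hcw he hv
    have hcN : c ∈ N := (hM.1.1 t ht).2 (by simp [← he])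
    have hwN : w ∈ N := (hM.1.1 t ht).2 (by simp [← he])
    have e1 := hM.1.utility_eq_add (val := val) hyc hyw hcw (he ▸ ht)
    have e2 := hM.1.utility_eq_add (val := val) (x := c) (y := y) (z := w) hyc.symm hcw hyw
      (by rw [Finset.insert_comm]; exact he ▸ ht)
    have e3 := hM.1.utility_eq_add (val := val) (x := w) (y := y) (z := c) hyw.symm hcw.symm hyc
      (by
        have : ({w, y, c} : Finset A) = t := by rw [← he]; ext; simp; tauto
        rw [this]; exact ht)
    have hw0 := hM.2 w ⟨t, ht, by simp [← he]⟩
    have s1 := hbs.2 y hyN c hcN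
    have s2 := hbs.2 y hyN w hwN
    have s3 := hbs.2 c hcN w hwN
    have b2 := hbs.1 y hyN w hwN hyw
    have b3 := hbs.1 c hcN w hwN hcw
    exact ⟨c, w, hcN, hwN, hyc, hyw, hcw, he ▸ ht, by omega, by omega, by omega, by omega,
      by omega⟩
  have e := hM.1.utility_eq_add (val := val) hyp hyq hpq (hteq ▸ ht)
  have hpN : p ∈ N := (hM.1.1 t ht).2 (by simp [hteq])
  have hqN : q ∈ N := (hM.1.1 t ht).2 (by simp [hteq])
  rcases hbs.1 y hyN p hpN hyp with hv | hv
  · refine main q p hyq hyp hpq.symm (by rw [hteq, Finset.pair_comm]) ?_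
    rcases hbs.1 y hyN q hqN hyq with hv' | hv'
    · omega
    · exact hv'
  · exact main p q hyp hyq hpq hteq.symm hv

/-- If the only unmatched agent preventing stability is `h`, then a `P`-matching that matches `h`
and does not decrease any utility is stable. -/
lemma IsPMatching.isStable_of_utility_le {M' : Finset (Finset A)} {h : A} (hbs : BinSym N val)
    (htf : TriangleFree N val) (hM : IsPMatching N val M)
    (hS : ∀ y ∈ N, utility val M' y < 2 → ∀ x ∈ N, ∀ z ∈ N, y ≠ x → y ≠ z → x ≠ z →
      val y x = 1 → val y z = 1 → (utility val M x = 0 ∧ x ≠ h) →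
      (utility val M z = 0 ∧ z ≠ h) → 2 ≤ utility val M y)
    (hM' : IsPMatching N val M') (hle : ∀ a, utility val M a ≤ utility val M' a)
    (hh : 0 < utility val M' h) : IsStable N val M' := by
  refine hM'.isStable hbs htf ?_
  intro y hy x hx z hz hyx hyz hxz vx vz ux uz
  by_contra hlt
  push Not at hlt
  have h1 := hle x
  have h2 := hle z
  have h3 := hM.utility_nonneg x
  have h4 := hM.utility_nonneg z
  have h5 := hS y hy hlt x hx z hz hyx hyz hxz vx vz ⟨by omega, by rintro rfl; omega⟩
    ⟨by omega, by rintro rfl; omega⟩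
  have h6 := hle y
  omega

/-- The agents of utility `2` with an unmatched neighbour other than `h`. -/
noncomputable def spareCentres (N : Finset A) (val : A → A → ℤ) (M : Finset (Finset A)) (h : A) :
    Finset A :=
  open Classical in
  N.filter fun v => utility val M v = 2 ∧
    ∃ z ∈ N, z ≠ v ∧ val v z = 1 ∧ utility val M z = 0 ∧ z ≠ h

/-- Repair of a `P`-matching all of whose instabilities involve the unmatched agent `h`. -/
lemma exists_stable_of_saturates (hbs : BinSym N val) (htf : TriangleFree N val) (k : ℕ) :
    ∀ (M : Finset (Finset A)) (h : A), h ∈ N → utility val M h = 0 → IsPMatching N val M →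
      Saturates N val M (fun a => utility val M a = 0 ∧ a ≠ h) →
      N.card - (spareCentres N val M h).card ≤ k →
      ∃ M', IsPMatching N val M' ∧ IsStable N val M' := by
  induction k using Nat.strong_induction_on with
  | _ k ih =>
  intro M h hhN uh hM hS hk
  by_cases hst : Saturates N val M fun a => utility val M a = 0
  · exact ⟨M, hM, hM.isStable hbs htf hst⟩
  have hex : ∃ y ∈ N, ∃ z ∈ N, y ≠ h ∧ y ≠ z ∧ h ≠ z ∧ val y h = 1 ∧ val y z = 1 ∧
      utility val M z = 0 ∧ utility val M y < 2 := by
    by_contra hno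
    push Not at hno
    refine hst fun y hy x hx z hz hyx hyz hxz vx vz ux uz => ?_
    by_cases h1 : x = h
    · subst h1
      exact hno y hy z hz hyx hyz hxz vx vz uz
    by_cases h2 : z = h
    · subst h2
      exact hno y hy x hx hyz hyx (Ne.symm hxz) vz vx ux
    exact hS y hy x hx z hz hyx hyz hxz vx vz ⟨ux, h1⟩ ⟨uz, h2⟩
  obtain ⟨y, hyN, z, hzN, hyh, hyz, hhz, vyh, vyz, uz, uy⟩ := hex
  by_cases uy0 : utility val M y = 0
  · obtain ⟨hM', u1, u2, u3, u4⟩ := hM.insert_path hbs hhN hyN hzN hyh.symm hhz hyz uh uy0 uz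
      vyh vyz
    refine ⟨_, hM', IsPMatching.isStable_of_utility_le hbs htf hM
      (fun y hy _ => hS y hy) hM' ?_ u2⟩
    intro a
    by_cases h1 : a = h
    · subst h1; omega
    by_cases h2 : a = y
    · subst h2; omega
    by_cases h3 : a = z
    · subst h3; omega
    exact (u4 a h1 h2 h3).ge
  obtain ⟨c, w, hcN, hwN, hyc, hyw, hcw, ht, vcy, vcw, uy1, uc, uw⟩ := hM.exists_path hbs uy0 uy
  obtain ⟨hE, E0, E1⟩ := hM.erase ht
  have hch : c ≠ h := by rintro rfl; omega
  have hcz : c ≠ z := by rintro rfl; omega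
  have hwh : w ≠ h := by rintro rfl; omega
  have hwz : w ≠ z := by rintro rfl; omega
  have Ey := E0 y (by simp)
  have Ec := E0 c (by simp)
  have Ew := E0 w (by simp)
  have Eo : ∀ a, a ≠ y → a ≠ c → a ≠ w →
      utility val (M.erase {y, c, w}) a = utility val M a := fun a h1 h2 h3 =>
    E1 a (by simp [h1, h2, h3])
  have vyc : val y c = 1 := by rw [hbs.2 y hyN c hcN, vcy]
  by_cases hd : ∃ d ∈ N, d ≠ c ∧ utility val M d = 0 ∧ val c d = 1
  · obtain ⟨d, hdN, hdc, ud, vcd⟩ := hd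
    have hdy : d ≠ y := by rintro rfl; omega
    have hdw : d ≠ w := by rintro rfl; omega
    have hdh : d ≠ h := by
      rintro rfl
      exact htf c y d ⟨hcN, hyN, hdN, hyc.symm, hdc.symm, hdy.symm, vcy, vyh, vcd⟩
    have hdz : d ≠ z := by
      rintro rfl
      exact htf c y d ⟨hcN, hyN, hdN, hyc.symm, hdc.symm, hdy.symm, vcy, vyz, vcd⟩
    obtain ⟨hM1, a1, a2, a3, a4⟩ := hE.insert_path hbs hwN hcN hdN hcw.symm hdw.symm hdc.symm
      Ew Ec (by rw [Eo d hdy hdc hdw, ud]) vcw vcd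
    obtain ⟨hM', u1, u2, u3, u4⟩ := hM1.insert_path hbs hhN hyN hzN hyh.symm hhz hyz
      (by rw [a4 h hwh.symm hch.symm hdh.symm, Eo h hyh.symm hch.symm hwh.symm, uh])
      (by rw [a4 y hyw hyc hdy.symm, Ey])
      (by rw [a4 z hwz.symm hcz.symm hdz.symm, Eo z hyz.symm hcz.symm hwz.symm, uz])
      vyh vyz
    refine ⟨_, hM', IsPMatching.isStable_of_utility_le hbs htf hM
      (fun y hy _ => hS y hy) hM' ?_ u2⟩
    intro a
    by_cases h1 : a = h
    · subst h1; omega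
    by_cases h2 : a = y
    · subst h2; omega
    by_cases h3 : a = z
    · subst h3; omega
    rw [u4 a h1 h2 h3]
    by_cases h4 : a = w
    · subst h4; omega
    by_cases h5 : a = c
    · subst h5; omega
    by_cases h6 : a = d
    · subst h6; omega
    rw [a4 a h4 h5 h6, Eo a h2 h5 h4]
  push Not at hd
  obtain ⟨hM', u1, u2, u3, u4⟩ := hE.insert_path hbs hcN hyN hhN hyc.symm hch hyh Ec Ey
    (by rw [Eo h hyh.symm hch.symm hwh.symm, uh]) vyc vyh
  have uo : ∀ a, a ≠ c → a ≠ y → a ≠ h → a ≠ w →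
      utility val (insert {c, y, h} (M.erase {y, c, w})) a = utility val M a :=
    fun a h1 h2 h3 h4 => by rw [u4 a h1 h2 h3, Eo a h2 h1 h4]
  have uw' : utility val (insert {c, y, h} (M.erase {y, c, w})) w = 0 := by
    rw [u4 w hcw.symm hyw.symm hwh, Ew]
  generalize insert {c, y, h} (M.erase {y, c, w}) = M' at *
  have back : ∀ a, utility val M' a = 0 → a ≠ w → utility val M a = 0 ∧ a ≠ h := by
    intro a ha haw
    have h1 : a ≠ c := by rintro rfl; omega
    have h2 : a ≠ y := by rintro rfl; omega
    have h3 : a ≠ h := by rintro rfl; omega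
    exact ⟨by rw [← uo a h1 h2 h3 haw, ha], h3⟩
  have forth : ∀ a, utility val M a = 0 → a ≠ h → utility val M' a = 0 ∧ a ≠ w := by
    intro a ha hah
    have h1 : a ≠ c := by rintro rfl; omega
    have h2 : a ≠ y := by rintro rfl; omega
    have h3 : a ≠ w := by rintro rfl; omega
    exact ⟨by rw [uo a h1 h2 hah h3, ha], h3⟩
  have hlt : (spareCentres N val M h).card < (spareCentres N val M' w).card := by
    refine Finset.card_lt_card (Finset.ssubset_iff_of_subset ?_ |>.2 ⟨y, ?_, ?_⟩)
    · intro v hv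
      simp only [spareCentres, Finset.mem_filter] at hv ⊢
      obtain ⟨hvN, uv, b, hbN, hbv, vvb, ub, hbh⟩ := hv
      have h1 : v ≠ c := by
        rintro rfl
        exact hd b hbN hbv ub vvb
      have h2 : v ≠ y := by rintro rfl; omega
      have h3 : v ≠ h := by rintro rfl; omega
      have h4 : v ≠ w := by rintro rfl; omega
      exact ⟨hvN, by rw [uo v h1 h2 h3 h4, uv], b, hbN, hbv, vvb, forth b ub hbh⟩
    · simp only [spareCentres, Finset.mem_filter]
      exact ⟨hyN, u1, z, hzN, hyz.symm, vyz, forth z uz hhz.symm⟩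
    · simp only [spareCentres, Finset.mem_filter]
      rintro ⟨-, h2, -⟩
      omega
  have hle : (spareCentres N val M' w).card ≤ N.card := by
    unfold spareCentres
    exact Finset.card_filter_le _ _
  refine ih (N.card - (spareCentres N val M' w).card) (by omega) M' w hwN uw' hM' ?_ le_rfl
  intro v hv a ha b hb hva hvb hab va vb ⟨ua, haw⟩ ⟨ub, hbw⟩
  obtain ⟨ua', hah⟩ := back a ua haw
  obtain ⟨ub', hbh⟩ := back b ub hbw
  have h2 := hS v hv a ha b hb hva hvb hab va vb ⟨ua', hah⟩ ⟨ub', hbh⟩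
  have h1 : v ≠ c := by
    rintro rfl
    exact hd a ha hva.symm ua' va
  by_cases h3 : v = y
  · subst h3; omega
  have h4 : v ≠ h := by rintro rfl; omega
  have h5 : v ≠ w := by rintro rfl; omega
  rw [uo v h1 h3 h4 h5]
  exact h2

end TriangleFree

section Existence

variable [DecidableEq A] {N : Finset A} {val : A → A → ℤ} {M : Finset (Finset A)}

lemma IsMatching.utility_eq_zero (hM : IsMatching N M) {a : A} (ha : a ∉ N) :
    utility val M a = 0 :=
  utility_eq_zero_of_unmatched fun t ht hat => ha ((hM.1 t ht).2 hat)

lemma BinSym.val_le_one (hbs : BinSym N val) {a b : A} (ha : a ∈ N) (hb : b ∈ N) (hab : a ≠ b) :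
    val a b ≤ 1 := by
  rcases hbs.1 a ha b hb hab with h | h <;> omega

/-- A triangle can be split off: its members have the largest possible utility. -/
lemma exists_stable_of_isTriangle (hbs : BinSym N val) {x y z : A}
    (ht : IsTriangle N val x y z) (hM : IsPMatching (N \ {x, y, z}) val M)
    (hst : IsStable (N \ {x, y, z}) val M) :
    ∃ M', IsPMatching N val M' ∧ IsStable N val M' := by
  obtain ⟨hx, hy, hz, hxy, hxz, hyz, vxy, vyz, vxz⟩ := ht
  have vyx : val y x = 1 := by rw [hbs.2 y hy x hx, vxy]
  obtain ⟨hM', u1, u2, u3, u4⟩ := (hM.mono Finset.sdiff_subset).insert_path hbs hx hy hz hxy hxz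
    hyz (hM.1.utility_eq_zero (by simp)) (hM.1.utility_eq_zero (by simp))
    (hM.1.utility_eq_zero (by simp)) vyx vyz
  refine ⟨_, hM', ?_⟩
  have hmem : {x, y, z} ∈ insert {x, y, z} M := Finset.mem_insert_self _ _
  have ex := hM'.1.utility_eq_add (val := val) hxy hxz hyz hmem
  have ez := hM'.1.utility_eq_add (val := val) (x := z) (y := x) (z := y) hxz.symm hyz.symm hxy
    (by
      have : ({z, x, y} : Finset A) = {x, y, z} := by ext; simp; tauto
      rw [this]; exact hmem)
  rw [hbs.2 z hz x hx, hbs.2 z hz y hy] at ez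
  have key : ∀ a b c, a ∈ N → b ∈ N → c ∈ N → a ≠ b → a ≠ c →
      utility val (insert {x, y, z} M) a < val a b + val a c →
      a ∈ N \ {x, y, z} ∧ utility val M a < val a b + val a c := by
    intro a b c ha hb hc hab hac hlt
    have l1 := hbs.val_le_one ha hb hab
    have l2 := hbs.val_le_one ha hc hac
    have h1 : a ≠ x := by rintro rfl; omega
    have h2 : a ≠ y := by rintro rfl; omega
    have h3 : a ≠ z := by rintro rfl; omega
    rw [u4 a h1 h2 h3] at hlt
    exact ⟨by simp [ha, h1, h2, h3], hlt⟩
  rintro a b c ⟨ha, hb, hc, hab, hac, hbc, b1, b2, b3⟩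
  obtain ⟨ha', b1'⟩ := key a b c ha hb hc hab hac b1
  obtain ⟨hb', b2'⟩ := key b a c hb ha hc hab.symm hbc b2
  obtain ⟨hc', b3'⟩ := key c a b hc ha hb hac.symm hbc.symm b3
  exact hst a b c ⟨ha', hb', hc', hab, hac, hbc, b1', b2', b3'⟩

lemma exists_isPMatching_isStable (val : A → A → ℤ) (n : ℕ) :
    ∀ N : Finset A, N.card = n → BinSym N val →
      ∃ M, IsPMatching N val M ∧ IsStable N val M := by
  induction n using Nat.strong_induction_on with
  | _ n ih =>
  intro N hn hbs
  by_cases htf : TriangleFree N val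
  · rcases N.eq_empty_or_nonempty with rfl | ⟨h, hh⟩
    · refine ⟨∅, ⟨⟨by simp, by simp⟩, by simp⟩, ?_⟩
      rintro x y z ⟨hx, -⟩
      simp at hx
    obtain ⟨M, hM, hst⟩ := ih (N.erase h).card (by rw [← hn]; exact Finset.card_erase_lt_of_mem hh)
      (N.erase h) rfl (hbs.mono (Finset.erase_subset _ _))
    have uh : utility val M h = 0 := hM.1.utility_eq_zero (by simp)
    have hMN := hM.mono (Finset.erase_subset h N)
    have hS : ∀ y ∈ N, y ≠ h → ∀ x ∈ N, ∀ z ∈ N, y ≠ x → y ≠ z → x ≠ z → val y x = 1 →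
        val y z = 1 → (utility val M x = 0 ∧ x ≠ h) → (utility val M z = 0 ∧ z ≠ h) →
        2 ≤ utility val M y := by
      intro y hy hyh x hx z hz hyx hyz hxz vx vz ⟨ux, hxh⟩ ⟨uz, hzh⟩
      by_contra hlt
      have s1 := hbs.2 x hx y hy
      have s2 := hbs.2 z hz y hy
      have b1 := hbs.1 x hx z hz hxz
      have b2 := hbs.1 z hz x hx hxz.symm
      exact hst y x z ⟨by simp [hy, hyh], by simp [hx, hxh], by simp [hz, hzh], hyx, hyz, hxz,
        by omega, by omega, by omega⟩
    by_cases hhS : Saturates N val M fun a => utility val M a = 0 ∧ a ≠ h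
    · exact exists_stable_of_saturates hbs htf _ M h hh uh hMN hhS le_rfl
    unfold Saturates at hhS
    push Not at hhS
    obtain ⟨y, hy, x, hx, z, hz, hyx, hyz, hxz, vx, vz, ⟨ux, hxh⟩, ⟨uz, hzh⟩, hlt⟩ := hhS
    have hyh : y = h := by
      by_contra hyh
      have := hS y hy hyh x hx z hz hyx hyz hxz vx vz ⟨ux, hxh⟩ ⟨uz, hzh⟩
      omega
    subst hyh
    obtain ⟨hM', u1, u2, u3, u4⟩ := hMN.insert_path hbs hx hy hz hyx.symm hxz hyz ux uh uz vx vz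
    refine ⟨_, hM', IsPMatching.isStable_of_utility_le hbs htf hMN
      (fun v hv hv2 => hS v hv (by rintro rfl; omega)) hM' ?_ (by omega)⟩
    intro a
    by_cases h1 : a = x
    · subst h1; omega
    by_cases h2 : a = y
    · subst h2; omega
    by_cases h3 : a = z
    · subst h3; omega
    exact (u4 a h1 h2 h3).ge
  · unfold TriangleFree at htf
    push Not at htf
    obtain ⟨x, y, z, ht⟩ := htf
    obtain ⟨M, hM, hst⟩ := ih (N \ {x, y, z}).card
      (by
        rw [← hn]
        exact Finset.card_lt_card (Finset.ssubset_iff_of_subset Finset.sdiff_subset |>.2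
          ⟨x, ht.1, by simp⟩)) _ rfl (hbs.mono Finset.sdiff_subset)
    exact exists_stable_of_isTriangle hbs ht hM hst

/-- If `3` divides the number of agents, a stable matching extends to one matching everybody. -/
lemma exists_stable_perfect (hbs : BinSym N val) (h3 : 3 ∣ N.card) (k : ℕ) :
    ∀ M, IsMatching N M → IsStable N val M → (N \ M.biUnion id).card = k →
      ∃ M', IsMatching N M' ∧ IsStable N val M' ∧ ∀ a ∈ N, ∃ t ∈ M', a ∈ t := by
  induction k using Nat.strong_induction_on with
  | _ k ih =>
  intro M hM hst hk
  by_cases hk0 : N \ M.biUnion id = ∅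
  · refine ⟨M, hM, hst, fun a ha => ?_⟩
    simpa using Finset.sdiff_eq_empty_iff_subset.1 hk0 ha
  have hsub : M.biUnion id ⊆ N := Finset.biUnion_subset.2 fun t ht => (hM.1 t ht).2
  have hcard : (M.biUnion id).card = M.card * 3 := by
    refine (Finset.card_biUnion (t := id) fun t ht s hs hne => hM.2 t ht s hs hne).trans ?_
    exact Finset.sum_const_nat fun t ht => (hM.1 t ht).1
  have hpos := Finset.card_pos.2 (Finset.nonempty_iff_ne_empty.2 hk0)
  have hle : 3 ≤ (N \ M.biUnion id).card := by
    have := Finset.card_sdiff_add_card_eq_card hsub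
    omega
  obtain ⟨t, htU, ht3⟩ := Finset.exists_subset_card_eq hle
  obtain ⟨x, y, z, hxy, hxz, hyz, rfl⟩ := Finset.card_eq_three.1 ht3
  have hU : ∀ a ∈ ({x, y, z} : Finset A), a ∈ N ∧ ∀ t ∈ M, a ∉ t := by
    intro a ha
    simpa using htU ha
  obtain ⟨hx, ux⟩ := hU x (by simp)
  obtain ⟨hy, uy⟩ := hU y (by simp)
  obtain ⟨hz, uz⟩ := hU z (by simp)
  have hM' := hM.insert hx hy hz hxy hxz hyz ux uy uz
  have hst' : IsStable N val (insert {x, y, z} M) := hst.of_utility_le ?_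
  refine ih _ ?_ _ hM' hst' rfl
  · rw [← hk]
    have hss : N \ (insert {x, y, z} M).biUnion id ⊆ N \ M.biUnion id :=
      Finset.sdiff_subset_sdiff le_rfl
        (Finset.biUnion_subset_biUnion_of_subset_left _ (Finset.subset_insert _ _))
    have hxU : x ∈ N \ M.biUnion id := htU (by simp)
    exact Finset.card_lt_card ((Finset.ssubset_iff_of_subset hss).2 ⟨x, hxU, by simp⟩)
  · intro a ha
    by_cases hat : a ∈ ({x, y, z} : Finset A)
    · rw [utility_eq_zero_of_unmatched (hU a hat).2,
        hM'.utility_eq (Finset.mem_insert_self _ _) hat]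
      refine Finset.sum_nonneg fun b hb => ?_
      rcases hbs.1 a ha b (hU b (Finset.mem_of_mem_erase hb)).1 (Finset.ne_of_mem_erase hb).symm
        with h | h <;> omega
    · rw [utility_insert_of_notMem hat]

end Existence

/-- Every binary symmetric instance contains a stable `P`-matching (hence a stable
matching); moreover, if `|N|` is a multiple of three, it contains a stable matching in
which every agent is matched. -/
theorem exists_stable_pmatching_binSym [DecidableEq A]
    (N : Finset A) (val : A → A → ℤ) (hbs : BinSym N val) :
    (∃ M, IsPMatching N val M ∧ IsStable N val M) ∧
    (3 ∣ N.card →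
      ∃ M, IsMatching N M ∧ IsStable N val M ∧ ∀ a ∈ N, ∃ t ∈ M, a ∈ t) := by
  obtain ⟨M, hM, hst⟩ := exists_isPMatching_isStable val N.card N rfl hbs
  exact ⟨⟨M, hM, hst⟩, fun h3 => exists_stable_perfect hbs h3 _ M hM.1 hst rfl⟩
end
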